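/- Let 𝕜 ≠ F_2 be a finite field of characteristic p and let n ≥ 2 be an integer. Assume: if n = 4 then 𝕜 ≠ F_3; if n = 3 then 𝕜 ≠ F_4; if n = 2 then 𝕜 is neither F_3 nor F_9. Then for every integer m ≥ 1, H¹(SL_n(W_m), 𝕜) = 0, where 𝕜 carries the trivial SL_n(W_m)-action. -/

import Mathlib

/-!
For trivial coefficients `H¹(G, 𝕜)` is the group of homomorphisms `G → 𝕜`, so it is enough that
every homomorphism from `G = SL_n(W_m)` to a commutative group is trivial.

The ring `W_m` is local, being a nonzero quotient of the discrete valuation ring `W`, and over a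
local ring `SL_n` is generated by transvections `1 + c E_{ij}`, by Gaussian elimination
(`mem_of_transvection_mem`). It remains to see that every transvection dies in the
abelianization.

* If `n ≥ 3`, choose `k` different from `i, j`; then `1 + c E_{ij}` is the commutator of
  `1 + c E_{ik}` and `1 + E_{kj}` (`map_transvection_of_third_index`).
* If `|𝕜| ≥ 4`, choose `a ∈ 𝕜` different from `0, 1, -1`, and let `u` be the image in `W_m` of its
  Teichmüller lift. Then `u` and `u² - 1` are units, and conjugation by `diag(u, u⁻¹)` in the
  positions `i, j` multiplies the coefficient `c` by `u²`, so `1 + (u² - 1) c E_{ij}` is a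
  commutator for every `c` (`map_transvection_of_unit`).

The hypotheses leave no other case: `|𝕜| ≥ 3` always, and `|𝕜| ≥ 4` when `n = 2`.
-/

open groupCohomology

section

variable (p : ℕ) [Fact p.Prime] (𝕜 : Type) [Field 𝕜] [Fintype 𝕜] [CharP 𝕜 p]

/-- The `𝔽_p`-module structure on `𝕜` (characteristic `p`). -/
noncomputable local instance : Algebra (ZMod p) 𝕜 := ZMod.algebra 𝕜 p

/-- `W_m = W(𝕜)/p^m W(𝕜)`, where `W(𝕜)` is the ring of Witt vectors of `𝕜`. -/
abbrev WittQuot (m : ℕ) : Type :=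
  WittVector p 𝕜 ⧸ Ideal.span {(p : WittVector p 𝕜) ^ m}

/-! ### Generation of the special linear group by transvections -/

section Generation

open Matrix Matrix.SpecialLinearGroup

variable {ι R : Type*} [Fintype ι] [DecidableEq ι] [CommRing R]

/-- The matrix `M` agrees with the identity matrix outside the block `S × S`. -/
def SupportedOn (S : Finset ι) (M : SpecialLinearGroup ι R) : Prop :=
  ∀ a b, (a ∉ S ∨ b ∉ S) → M.1 a b = (1 : Matrix ι ι R) a b

theorem transvection_mul_entry {i j : ι} (hij : i ≠ j) (c : R) (M : SpecialLinearGroup ι R)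
    (a b : ι) :
    (transvection hij c * M).1 a b = if a = i then M.1 i b + c * M.1 j b else M.1 a b := by
  change (Matrix.transvection i j c * M.1) a b = _
  split_ifs with h
  · subst h; simp
  · exact Matrix.transvection_mul_apply_of_ne _ _ _ _ h _ _

theorem mul_transvection_entry {i j : ι} (hij : i ≠ j) (c : R) (M : SpecialLinearGroup ι R)
    (a b : ι) :
    (M * transvection hij c).1 a b = if b = j then M.1 a j + c * M.1 a i else M.1 a b := by
  change (M.1 * Matrix.transvection i j c) a b = _
  split_ifs with h
  · subst h; simp
  · exact Matrix.mul_transvection_apply_of_ne _ _ _ _ h _ _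

theorem SupportedOn.transvection_mul {S : Finset ι} {M : SpecialLinearGroup ι R}
    (hM : SupportedOn S M) {i j : ι} (hij : i ≠ j) (hi : i ∈ S) (hj : j ∈ S) (c : R) :
    SupportedOn S (transvection hij c * M) := by
  intro a b hab
  rw [transvection_mul_entry]
  split_ifs with h
  · subst h
    have hb : b ∉ S := hab.resolve_left (not_not_intro hi)
    rw [hM a b hab, hM j b (Or.inr hb), Matrix.one_apply_ne (fun h => hb (h ▸ hj) : j ≠ b)]
    simp
  · exact hM a b hab

theorem SupportedOn.mul_transvection {S : Finset ι} {M : SpecialLinearGroup ι R}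
    (hM : SupportedOn S M) {i j : ι} (hij : i ≠ j) (hi : i ∈ S) (hj : j ∈ S) (c : R) :
    SupportedOn S (M * transvection hij c) := by
  intro a b hab
  rw [mul_transvection_entry]
  split_ifs with h
  · subst h
    have ha : a ∉ S := hab.resolve_right (not_not_intro hj)
    rw [hM a b hab, hM a i (Or.inl ha), Matrix.one_apply_ne (fun h => ha (h ▸ hi) : a ≠ i)]
    simp
  · exact hM a b hab

/-- An invertible matrix over a local ring has a unit in every column, and if it is supported on
`S` and the column lies in `S`, the unit is found in a row of `S`. -/
theorem SupportedOn.exists_isUnit [IsLocalRing R] {S : Finset ι} {M : SpecialLinearGroup ι R}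
    (hM : SupportedOn S M) {k : ι} (hk : k ∈ S) : ∃ i ∈ S, IsUnit (M.1 i k) := by
  by_contra! hcon
  have hone : ∑ i, (M⁻¹).1 k i * M.1 i k = 1 := by
    have h : (M⁻¹).1 * M.1 = 1 := congrArg Subtype.val (inv_mul_cancel M)
    rw [← Matrix.mul_apply, h, Matrix.one_apply_eq]
  have hmem : (1 : R) ∈ IsLocalRing.maximalIdeal R := by
    rw [← hone]
    refine Ideal.sum_mem _ fun i _ => Ideal.mul_mem_left _ _ ?_
    by_cases hi : i ∈ S
    · exact (IsLocalRing.mem_maximalIdeal _).2 (hcon i hi)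
    · rw [hM i k (Or.inl hi), Matrix.one_apply_ne (by rintro rfl; exact hi hk)]
      exact Ideal.zero_mem _
  exact (IsLocalRing.mem_maximalIdeal _).1 hmem isUnit_one

variable {H : Subgroup (SpecialLinearGroup ι R)}

/-- Row operations clear the column of a pivot equal to `1`. -/
theorem exists_clear_column
    (hH : ∀ (i j : ι) (hij : i ≠ j) (c : R), transvection hij c ∈ H)
    {k : ι} {T : Finset ι} (hk : k ∉ T) {M : SpecialLinearGroup ι R}
    (hM : SupportedOn (insert k T) M) (h1 : M.1 k k = 1) (T' : Finset ι) (hT' : T' ⊆ T) :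
    ∃ g ∈ H, SupportedOn (insert k T) (g * M) ∧ (g * M).1 k k = 1 ∧
      ∀ i ∈ T', (g * M).1 i k = 0 := by
  induction T' using Finset.induction_on with
  | empty => exact ⟨1, H.one_mem, by simpa using hM, by simpa using h1, by simp⟩
  | insert i T' hi ih =>
    obtain ⟨g, hg, hs, hkk, hz⟩ := ih ((Finset.subset_insert _ _).trans hT')
    have hiT : i ∈ T := hT' (Finset.mem_insert_self _ _)
    have hik : i ≠ k := fun h => hk (h ▸ hiT)
    refine ⟨transvection hik (-(g * M).1 i k) * g, H.mul_mem (hH _ _ _ _) hg, ?_, ?_, ?_⟩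
    · rw [mul_assoc]
      exact hs.transvection_mul hik (Finset.mem_insert_of_mem hiT) (Finset.mem_insert_self _ _) _
    · rw [mul_assoc, transvection_mul_entry, if_neg hik.symm, hkk]
    · intro a ha
      rw [mul_assoc, transvection_mul_entry]
      split_ifs with h
      · rw [hkk]; ring
      · exact hz a ((Finset.mem_insert.1 ha).resolve_left h)

/-- Column operations clear the row of a pivot equal to `1` whose column is already clear. -/
theorem exists_clear_row
    (hH : ∀ (i j : ι) (hij : i ≠ j) (c : R), transvection hij c ∈ H)
    {k : ι} {T : Finset ι} (hk : k ∉ T) {M : SpecialLinearGroup ι R}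
    (hM : SupportedOn (insert k T) M) (h1 : M.1 k k = 1) (h0 : ∀ i ∈ T, M.1 i k = 0)
    (T' : Finset ι) (hT' : T' ⊆ T) :
    ∃ g ∈ H, SupportedOn (insert k T) (M * g) ∧ (M * g).1 k k = 1 ∧
      (∀ i ∈ T, (M * g).1 i k = 0) ∧ ∀ j ∈ T', (M * g).1 k j = 0 := by
  induction T' using Finset.induction_on with
  | empty =>
    exact ⟨1, H.one_mem, by simpa using hM, by simpa using h1, by simpa using h0, by simp⟩
  | insert j T' hj ih =>
    obtain ⟨g, hg, hs, hkk, hz0, hz⟩ := ih ((Finset.subset_insert _ _).trans hT')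
    have hjT : j ∈ T := hT' (Finset.mem_insert_self _ _)
    have hkj : k ≠ j := fun h => hk (h ▸ hjT)
    refine ⟨g * transvection hkj (-(M * g).1 k j), H.mul_mem hg (hH _ _ _ _), ?_, ?_, ?_, ?_⟩
    · rw [← mul_assoc]
      exact hs.mul_transvection hkj (Finset.mem_insert_self _ _) (Finset.mem_insert_of_mem hjT) _
    · rw [← mul_assoc, mul_transvection_entry, if_neg hkj, hkk]
    · intro a ha
      rw [← mul_assoc, mul_transvection_entry, if_neg hkj]
      exact hz0 a ha
    · intro a ha
      rw [← mul_assoc, mul_transvection_entry]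
      split_ifs with h
      · rw [hkk]; ring
      · exact hz a ((Finset.mem_insert.1 ha).resolve_left h)

/-- The elimination step for a matrix whose pivot is `1`. -/
theorem mem_of_pivot_eq_one
    (hH : ∀ (i j : ι) (hij : i ≠ j) (c : R), transvection hij c ∈ H)
    {k : ι} {T : Finset ι} (hk : k ∉ T)
    (ih : ∀ M : SpecialLinearGroup ι R, SupportedOn T M → M ∈ H)
    {M : SpecialLinearGroup ι R} (hM : SupportedOn (insert k T) M) (h1 : M.1 k k = 1) :
    M ∈ H := by
  obtain ⟨g, hg, hs, hkk, hz⟩ := exists_clear_column hH hk hM h1 T subset_rfl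
  obtain ⟨g', hg', hs', hkk', hz', hr'⟩ := exists_clear_row hH hk hs hkk hz T subset_rfl
  have hmem : g * M * g' ∈ H := by
    refine ih _ fun a b hab => ?_
    by_cases ha : a ∈ insert k T
    · by_cases hb : b ∈ insert k T
      · rcases Finset.mem_insert.1 ha with rfl | haT
        · rcases Finset.mem_insert.1 hb with rfl | hbT
          · rw [hkk', Matrix.one_apply_eq]
          · rw [hr' b hbT, Matrix.one_apply_ne (by rintro rfl; exact hk hbT)]
        · have hbT : b ∉ T := hab.resolve_left (not_not_intro haT)
          obtain rfl := (Finset.mem_insert.1 hb).resolve_right hbT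
          rw [hz' a haT, Matrix.one_apply_ne (by rintro rfl; exact hbT haT)]
      · exact hs' a b (Or.inr hb)
    · exact hs' a b (Or.inl ha)
  exact (H.mul_mem_cancel_left hg).1 ((H.mul_mem_cancel_right hg').1 hmem)

/-- The elimination step for a matrix whose pivot is a unit, given a second index `j` available
for rescaling the pivot to `1`. -/
theorem mem_of_isUnit_pivot
    (hH : ∀ (i j : ι) (hij : i ≠ j) (c : R), transvection hij c ∈ H)
    {k j : ι} {T : Finset ι} (hk : k ∉ T) (hj : j ∈ T)
    (ih : ∀ M : SpecialLinearGroup ι R, SupportedOn T M → M ∈ H)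
    {M : SpecialLinearGroup ι R} (hM : SupportedOn (insert k T) M) (hu : IsUnit (M.1 k k)) :
    M ∈ H := by
  obtain ⟨v, hv⟩ := hu.exists_left_inv
  have hkj : k ≠ j := fun h => hk (h ▸ hj)
  have hkS := Finset.mem_insert_self k T
  have hjS := Finset.mem_insert_of_mem (b := k) hj
  -- The first operation turns the entry `(j, k)` into `1`, the second one the pivot itself.
  have h := mem_of_pivot_eq_one hH hk ih
    ((hM.transvection_mul hkj.symm hjS hkS ((1 - M.1 j k) * v)).transvection_mul
      hkj hkS hjS (1 - M.1 k k)) (by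
      rw [transvection_mul_entry, if_pos rfl, transvection_mul_entry, if_neg hkj,
        transvection_mul_entry, if_pos rfl, mul_assoc, hv]
      ring)
  exact (H.mul_mem_cancel_left (hH _ _ _ _)).1 ((H.mul_mem_cancel_left (hH _ _ _ _)).1 h)

theorem mem_of_supportedOn [IsLocalRing R]
    (hH : ∀ (i j : ι) (hij : i ≠ j) (c : R), transvection hij c ∈ H)
    (S : Finset ι) :
    ∀ M : SpecialLinearGroup ι R, SupportedOn S M → M ∈ H := by
  induction S using Finset.induction_on with
  | empty =>
    intro M hM
    have : M = 1 := by
      ext a b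
      exact hM a b (Or.inl (Finset.notMem_empty _))
    exact this ▸ H.one_mem
  | insert k T hk ih =>
    intro M hM
    rcases T.eq_empty_or_nonempty with rfl | ⟨j, hj⟩
    · -- Here `M` is diagonal with at most one diagonal entry other than `1`.
      refine mem_of_pivot_eq_one hH hk ih hM ?_
      have hdiag : M.1 = Matrix.diagonal (fun a => M.1 a a) := by
        ext a b
        by_cases hab : a = b
        · subst hab; simp
        · rw [Matrix.diagonal_apply_ne _ hab, hM a b, Matrix.one_apply_ne hab]
          simp only [insert_empty_eq, Finset.mem_singleton]
          by_contra! h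
          exact hab (h.1.trans h.2.symm)
      have hdet := M.2
      rw [hdiag, Matrix.det_diagonal, Finset.prod_eq_single k] at hdet
      · exact hdet
      · intro b _ hb
        rw [hM b b (Or.inl (by simpa using hb)), Matrix.one_apply_eq]
      · simp
    · by_cases hu : IsUnit (M.1 k k)
      · exact mem_of_isUnit_pivot hH hk hj ih hM hu
      · obtain ⟨i, hi, hui⟩ := hM.exists_isUnit (Finset.mem_insert_self k T)
        have hki : k ≠ i := by rintro rfl; exact hu hui
        have h := mem_of_isUnit_pivot hH hk hj ih
          (hM.transvection_mul hki (Finset.mem_insert_self k T) hi 1) (by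
            rw [transvection_mul_entry, if_pos rfl, one_mul]
            by_contra hn
            have := IsLocalRing.nonunits_add hn (mt (IsUnit.neg_iff _).1 hu)
            rw [add_neg_cancel_comm] at this
            exact this hui)
        exact (H.mul_mem_cancel_left (hH _ _ _ _)).1 h

/-- Over a local ring the special linear group is generated by transvections. -/
theorem mem_of_transvection_mem [IsLocalRing R]
    (hH : ∀ (i j : ι) (hij : i ≠ j) (c : R), transvection hij c ∈ H)
    (M : SpecialLinearGroup ι R) : M ∈ H :=
  mem_of_supportedOn hH Finset.univ M fun a _ h => by simp at h

end Generation

/-! ### Transvections in the abelianization -/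

section Abelianization

open Matrix Matrix.SpecialLinearGroup

variable {ι R A : Type*} [Fintype ι] [DecidableEq ι] [CommRing R] [CommGroup A]

theorem map_transvection_of_third_index (f : SpecialLinearGroup ι R →* A) {i j k : ι}
    (hij : i ≠ j) (hik : i ≠ k) (hkj : k ≠ j) (c : R) : f (transvection hij c) = 1 := by
  have h : transvection hik c * transvection hkj 1 =
      transvection hij c * transvection hkj 1 * transvection hik c := by
    apply Subtype.ext
    simp [transvection_coe, mul_add, add_mul, hij.symm, hkj.symm]
    abel
  have hf := congrArg f h
  simp only [map_mul] at hf
  rw [mul_assoc, mul_comm (f (transvection hkj 1))] at hf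
  exact right_eq_mul.1 hf

/-- The diagonal matrix with `u` in position `i`, `u⁻¹` in position `j`, and `1` elsewhere. -/
def diagUnit {i j : ι} (hij : i ≠ j) (u : Rˣ) : SpecialLinearGroup ι R :=
  ⟨Matrix.diagonal fun a => if a = i then (u : R) else if a = j then ((u⁻¹ : Rˣ) : R) else 1, by
    rw [Matrix.det_diagonal, Finset.prod_eq_mul i j hij]
    · simp [hij.symm]
    · rintro a - ⟨h1, h2⟩
      simp [h1, h2]
    · simp
    · simp⟩

theorem map_transvection_of_unit (f : SpecialLinearGroup ι R →* A) {i j : ι}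
    (hij : i ≠ j) (u : Rˣ) (hu : IsUnit ((u : R) ^ 2 - 1)) (c : R) :
    f (transvection hij c) = 1 := by
  have key (x : R) : f (transvection hij (((u : R) ^ 2 - 1) * x)) = 1 := by
    have h : diagUnit hij u * transvection hij x =
        transvection hij ((u : R) ^ 2 * x) * diagUnit hij u := by
      ext a b
      rw [mul_transvection_entry, transvection_mul_entry]
      by_cases ha : a = i
      · subst ha
        by_cases hb : b = j
        · subst hb
          simp only [diagUnit, Matrix.diagonal_apply_eq, Matrix.diagonal_apply_ne _ hij, if_true,
            if_neg hij.symm]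
          linear_combination (-(x * u)) * u.mul_inv
        · simp only [diagUnit, if_true, if_neg hb, Matrix.diagonal_apply_ne' _ hb]
          ring
      · simp only [diagUnit, if_neg ha, Matrix.diagonal_apply_ne _ ha]
        split_ifs with hb
        · subst hb; ring
        · rfl
    have hf := congrArg f h
    rw [map_mul, map_mul, mul_comm, mul_left_inj] at hf
    have hx : (u : R) ^ 2 * x = ((u : R) ^ 2 - 1) * x + x := by ring
    rw [hx, transvection_add, map_mul] at hf
    exact right_eq_mul.1 hf
  obtain ⟨v, hv⟩ := hu.exists_right_inv
  have := key (v * c)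
  rwa [← mul_assoc, hv, one_mul] at this

end Abelianization

/-! ### The ring `W_m` -/

section WittVectorQuotient

theorem wittQuot_isLocalRing {m : ℕ} (hm : 1 ≤ m) : IsLocalRing (WittQuot p 𝕜 m) := by
  have : Nontrivial (WittQuot p 𝕜 m) := by
    refine Ideal.Quotient.nontrivial_iff.2 fun h => ?_
    rw [Ideal.span_singleton_eq_top] at h
    exact (WittVector.irreducible p).not_isUnit
      ((isUnit_pow_iff (Nat.one_le_iff_ne_zero.1 hm)).1 h)
  exact IsLocalRing.of_surjective' (Ideal.Quotient.mk _) Ideal.Quotient.mk_surjective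

theorem wittQuot_exists_unit (m : ℕ) (hcard : 4 ≤ Fintype.card 𝕜) :
    ∃ u : (WittQuot p 𝕜 m)ˣ, IsUnit ((u : WittQuot p 𝕜 m) ^ 2 - 1) := by
  classical
  obtain ⟨a, -, ha⟩ := Finset.exists_mem_notMem_of_card_lt_card
    (s := ({0, 1, -1} : Finset 𝕜)) (t := Finset.univ)
    (lt_of_le_of_lt Finset.card_le_three (by rw [Finset.card_univ]; omega))
  simp only [Finset.mem_insert, Finset.mem_singleton, not_or] at ha
  have hu : IsUnit (WittVector.teichmuller p a) :=
    WittVector.isUnit_of_coeff_zero_ne_zero _ (by simpa using ha.1)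
  have hu' : IsUnit (WittVector.teichmuller p a ^ 2 - 1) := by
    refine WittVector.isUnit_of_coeff_zero_ne_zero _ ?_
    rw [← WittVector.constantCoeff_apply]
    rw [map_sub, map_pow, map_one, WittVector.constantCoeff_apply,
      WittVector.teichmuller_coeff_zero, sub_ne_zero, Ne, sq_eq_one_iff]
    exact not_or.2 ha.2
  refine ⟨(hu.map (Ideal.Quotient.mk _)).unit, ?_⟩
  simpa using hu'.map (Ideal.Quotient.mk (Ideal.span {(p : WittVector p 𝕜) ^ m}))

end WittVectorQuotient

/-- Let `𝕜 ≠ 𝔽₂` be a finite field of characteristic `p`, `n ≥ 2`, with `𝕜 ≠ 𝔽₃` if `n = 4`,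
`𝕜 ≠ 𝔽₄` if `n = 3`, and `𝕜 ∉ {𝔽₃, 𝔽₉}` if `n = 2`.  Then for every `m ≥ 1`,
`H¹(SL_n(W_m), 𝕜) = 0`, where `𝕜` carries the trivial action. -/
theorem h1_sln_wittquot_trivial_coeffs
    (n : ℕ) (h2card : Fintype.card 𝕜 ≠ 2) (hn : 2 ≤ n)
    (h4 : n = 4 → Fintype.card 𝕜 ≠ 3)
    (h3 : n = 3 → Fintype.card 𝕜 ≠ 4)
    (h2 : n = 2 → Fintype.card 𝕜 ≠ 3 ∧ Fintype.card 𝕜 ≠ 9)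
    (m : ℕ) (hm : 1 ≤ m) :
    Subsingleton
      (groupCohomology.H1
        (Rep.trivial (ZMod p) (Matrix.SpecialLinearGroup (Fin n) (WittQuot p 𝕜 m)) 𝕜)) := by
  have := wittQuot_isLocalRing p 𝕜 hm
  have hcard : 1 < Fintype.card 𝕜 := Fintype.one_lt_card
  have htriv (f : Matrix.SpecialLinearGroup (Fin n) (WittQuot p 𝕜 m) →* Multiplicative 𝕜) (g) :
      f g = 1 := by
    refine mem_of_transvection_mem (H := f.ker) (fun i j hij c => ?_) g
    rw [MonoidHom.mem_ker]
    by_cases hn2 : n = 2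
    · obtain ⟨u, hu⟩ := wittQuot_exists_unit p 𝕜 m (by have := (h2 hn2).1; omega)
      exact map_transvection_of_unit f hij u hu c
    · obtain ⟨k, hk⟩ := Finset.exists_mem_notMem_of_card_lt_card
        (s := ({i, j} : Finset (Fin n))) (t := Finset.univ)
        (lt_of_le_of_lt Finset.card_le_two (by rw [Finset.card_univ, Fintype.card_fin]; omega))
      simp only [Finset.mem_insert, Finset.mem_singleton, not_or] at hk
      exact map_transvection_of_third_index f hij (Ne.symm hk.2.1) hk.2.2 c
  refine (H1IsoOfIsTrivial (Rep.trivial (ZMod p)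
    (Matrix.SpecialLinearGroup (Fin n)
      (WittQuot p 𝕜 m)) 𝕜)).toLinearEquiv.toEquiv.subsingleton_congr.2
    ⟨fun f f' => ?_⟩
  have hz (f : Additive (Matrix.SpecialLinearGroup (Fin n) (WittQuot p 𝕜 m)) →+ 𝕜) (x) :
      f x = 0 :=
    congrArg Multiplicative.toAdd (htriv (AddMonoidHom.toMultiplicativeRight f) x.toMul)
  exact DFunLike.ext _ _ fun x => (hz f x).trans (hz f' x).symm

end
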